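/- As t ↑ T, λ_t · ‖f_t ⊗₁ f_t‖² converges to 5/(4(2α−1)²); equivalently, ‖f_t ⊗₁ f_t‖² = 5/(4(2α−1)²λ_t) + o(1/λ_t). -/

import Mathlib

open MeasureTheory Real Filter Topology

/-- `λ_t := |log(T−t)|/(2α−1)`. -/
noncomputable def lam (T α t : ℝ) : ℝ := |Real.log (T - t)| / (2 * α - 1)

/-- The kernel `f_t`. -/
noncomputable def fker (T α t : ℝ) (u v : ℝ) : ℝ :=
  if u ∈ Set.Icc (0:ℝ) t ∧ v ∈ Set.Icc (0:ℝ) t then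
    (1 / (2 * Real.sqrt (lam T α t))) * (T - max u v) ^ (α - 1) * (T - min u v) ^ (-α)
  else 0

/-- The kernel `g_t`. -/
noncomputable def gker (T α t : ℝ) (u v : ℝ) : ℝ :=
  if u ∈ Set.Icc (0:ℝ) t ∧ v ∈ Set.Icc (0:ℝ) t then
    (T - u) ^ (-α) * (T - v) ^ (-α) *
      ((T - max u v) ^ (2 * α - 1) - (T - t) ^ (2 * α - 1)) / |Real.log (T - t)|
  else 0

/-- `⟨p,q⟩ := ∫_{[0,T]²} p(u,v) q(u,v) du dv`. -/
noncomputable def ip (T : ℝ) (p q : ℝ → ℝ → ℝ) : ℝ :=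
  ∫ u in Set.Icc (0:ℝ) T, ∫ v in Set.Icc (0:ℝ) T, p u v * q u v

/-- `‖p‖² := ⟨p,p⟩`. -/
noncomputable def normSq (T : ℝ) (p : ℝ → ℝ → ℝ) : ℝ := ip T p p

/-- The contraction `(p ⊗₁ q)(x,y) := ∫₀^T p(x,u) q(y,u) du`. -/
noncomputable def contr (T : ℝ) (p q : ℝ → ℝ → ℝ) : ℝ → ℝ → ℝ :=
  fun x y => ∫ u in Set.Icc (0:ℝ) T, p x u * q y u

/-- `b_t := (1/λ_t)·∫₀ᵗ ∫₀ˢ (T−s)^{2α−2}(T−u)^{−2α} du ds`. -/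
noncomputable def bfun (T α t : ℝ) : ℝ :=
  (1 / lam T α t) *
    ∫ s in (0:ℝ)..t, ∫ u in (0:ℝ)..s, (T - s) ^ (2 * α - 2) * (T - u) ^ (-(2 * α))

/-- `A_{t,1}`. -/
noncomputable def A1 (T α t : ℝ) : ℝ :=
  (1 / (lam T α t) ^ 2) *
    ∫ x4 in (0:ℝ)..t, ∫ x3 in (0:ℝ)..x4, ∫ x2 in (0:ℝ)..x3, ∫ x1 in (0:ℝ)..x2,
      (T - x4) ^ (2 * α - 2) * (T - x3) ^ (-1 : ℝ) * (T - x2) ^ (-1 : ℝ) *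
        (T - x1) ^ (-(2 * α))

/-- `A_{t,2}`. -/
noncomputable def A2 (T α t : ℝ) : ℝ :=
  (1 / (2 * (lam T α t) ^ 2)) *
    ∫ x4 in (0:ℝ)..t, ∫ x2 in (0:ℝ)..x4, ∫ x3 in (0:ℝ)..x2, ∫ x1 in (0:ℝ)..x3,
      (T - x4) ^ (2 * α - 2) * (T - x2) ^ (2 * α - 2) * (T - x3) ^ (-(2 * α)) *
        (T - x1) ^ (-(2 * α))

/-!
In the coordinate `a = log (T / (T - u))`, and with kernels transformed as half-densities so that
contractions and norms are preserved, `f_t` becomes `(2√λ_t)⁻¹ e^{-γ|a - b|}` on a square of side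
`L = log (T / (T - t))`, where `γ = α - 1/2`. For a translation-invariant kernel on `[0, L]²` the
squared norm of the contraction grows like `L` times the squared `L²` norm of the autocorrelation
of its profile. Here that autocorrelation is `e^{-γ|s|}(|s| + 1/γ)`, of squared norm `5 / (2γ³)`,
and `L / λ_t → 2γ`.
-/

section ContractionAlgebra

variable {L t T : ℝ} {p q p' q' : ℝ → ℝ → ℝ} {x y : ℝ}

lemma normSq_eq_integral_sq (L : ℝ) (p : ℝ → ℝ → ℝ) :
    normSq L p = ∫ u in Set.Icc 0 L, ∫ v in Set.Icc 0 L, p u v ^ 2 := by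
  simp only [normSq, ip, sq]

lemma normSq_congr (h : ∀ u ∈ Set.Icc 0 L, ∀ v ∈ Set.Icc 0 L, p u v = p' u v) :
    normSq L p = normSq L p' :=
  setIntegral_congr_fun measurableSet_Icc fun u hu =>
    setIntegral_congr_fun measurableSet_Icc fun v hv => by simp only [h u hu v hv]

lemma contr_congr (hp : ∀ u ∈ Set.Icc 0 L, p x u = p' x u)
    (hq : ∀ u ∈ Set.Icc 0 L, q y u = q' y u) : contr L p q x y = contr L p' q' x y :=
  setIntegral_congr_fun measurableSet_Icc fun u hu => by simp only [hp u hu, hq u hu]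

lemma normSq_contr_congr (hp : ∀ u ∈ Set.Icc 0 L, ∀ v ∈ Set.Icc 0 L, p u v = p' u v)
    (hq : ∀ u ∈ Set.Icc 0 L, ∀ v ∈ Set.Icc 0 L, q u v = q' u v) :
    normSq L (contr L p q) = normSq L (contr L p' q') :=
  normSq_congr fun u hu v hv => contr_congr (hp u hu) (hq v hv)

lemma normSq_smul (L c : ℝ) (p : ℝ → ℝ → ℝ) : normSq L (c • p) = c ^ 2 * normSq L p := by
  simp only [normSq_eq_integral_sq, Pi.smul_apply, smul_eq_mul, mul_pow, integral_const_mul]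

lemma contr_smul_smul (L c d : ℝ) (p q : ℝ → ℝ → ℝ) :
    contr L (c • p) (d • q) = (c * d) • contr L p q := by
  ext x y
  simp only [contr, Pi.smul_apply, smul_eq_mul, mul_mul_mul_comm c, integral_const_mul]

lemma normSq_eq_of_support_subset (ht : t ≤ T)
    (hp : ∀ u v, ¬(u ∈ Set.Icc 0 t ∧ v ∈ Set.Icc 0 t) → p u v = 0) :
    normSq T p = normSq t p := by
  have hsub : Set.Icc 0 t ⊆ Set.Icc 0 T := Set.Icc_subset_Icc_right ht
  have hinner (u : ℝ) : ∫ v in Set.Icc 0 T, p u v ^ 2 = ∫ v in Set.Icc 0 t, p u v ^ 2 :=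
    setIntegral_eq_of_subset_of_forall_sdiff_eq_zero measurableSet_Icc hsub fun v hv => by
      simp [hp u v fun h => hv.2 h.2]
  simp only [normSq_eq_integral_sq, hinner]
  exact setIntegral_eq_of_subset_of_forall_sdiff_eq_zero measurableSet_Icc hsub fun u hu => by
    simp [fun v => hp u v fun h => hu.2 h.1]

lemma contr_eq_of_support_subset (ht : t ≤ T) (hp : ∀ u ∉ Set.Icc 0 t, p x u = 0) :
    contr T p q x y = contr t p q x y :=
  setIntegral_eq_of_subset_of_forall_sdiff_eq_zero measurableSet_Icc
    (Set.Icc_subset_Icc_right ht) fun u hu => by rw [hp u hu.2, zero_mul]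

lemma normSq_contr_eq_of_support_subset (ht : t ≤ T)
    (hp : ∀ u v, ¬(u ∈ Set.Icc 0 t ∧ v ∈ Set.Icc 0 t) → p u v = 0)
    (hq : ∀ u v, ¬(u ∈ Set.Icc 0 t ∧ v ∈ Set.Icc 0 t) → q u v = 0) :
    normSq T (contr T p q) = normSq t (contr t p q) := by
  have hcontr : contr T p q = contr t p q := by
    ext x y
    exact contr_eq_of_support_subset ht fun u hu => hp x u fun h => hu h.2
  rw [hcontr]
  refine normSq_eq_of_support_subset ht fun x y hxy => ?_
  rcases not_and_or.1 hxy with hx | hy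
  · simp [contr, fun u => hp x u fun h => hx h.1]
  · simp [contr, fun u => hq y u fun h => hy h.1]

lemma measurable_contr (hp : Measurable p.uncurry) (hq : Measurable q.uncurry) :
    Measurable (contr L p q).uncurry := by
  have hprod : Measurable fun z : (ℝ × ℝ) × ℝ => p z.1.1 z.2 * q z.1.2 z.2 :=
    (hp.comp (by fun_prop : Measurable fun z : (ℝ × ℝ) × ℝ => (z.1.1, z.2))).mul
      (hq.comp (by fun_prop : Measurable fun z : (ℝ × ℝ) × ℝ => (z.1.2, z.2)))
  exact hprod.stronglyMeasurable.integral_prod_right'.measurable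

end ContractionAlgebra

section HalfDensity

/-- The pullback of a kernel along a change of variables `φ` with derivative `φ'`, weighted by
`√|φ'|` in each variable so that it acts isometrically on `L²` and commutes with contractions. -/
noncomputable def halfDensityPullback (φ φ' : ℝ → ℝ) (p : ℝ → ℝ → ℝ) (a b : ℝ) : ℝ :=
  √|φ' a| * √|φ' b| * p (φ a) (φ b)

variable {φ φ' : ℝ → ℝ} {L t : ℝ}

lemma contr_halfDensityPullback
    (hφ : ∀ a ∈ Set.Icc 0 L, HasDerivWithinAt φ (φ' a) (Set.Icc 0 L) a)
    (hinj : Set.InjOn φ (Set.Icc 0 L)) (himage : φ '' Set.Icc 0 L = Set.Icc 0 t)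
    (p q : ℝ → ℝ → ℝ) :
    contr L (halfDensityPullback φ φ' p) (halfDensityPullback φ φ' q) =
      halfDensityPullback φ φ' (contr t p q) := by
  ext a b
  simp only [contr, halfDensityPullback]
  rw [← himage, integral_image_eq_integral_abs_deriv_smul measurableSet_Icc hφ hinj,
    ← integral_const_mul]
  congr 1 with c
  rw [smul_eq_mul]
  linear_combination √|φ' a| * √|φ' b| * p (φ a) (φ c) * q (φ b) (φ c) *
    mul_self_sqrt (abs_nonneg (φ' c))

lemma normSq_halfDensityPullback
    (hφ : ∀ a ∈ Set.Icc 0 L, HasDerivWithinAt φ (φ' a) (Set.Icc 0 L) a)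
    (hinj : Set.InjOn φ (Set.Icc 0 L)) (himage : φ '' Set.Icc 0 L = Set.Icc 0 t)
    (p : ℝ → ℝ → ℝ) : normSq L (halfDensityPullback φ φ' p) = normSq t p := by
  simp only [normSq_eq_integral_sq, ← himage, halfDensityPullback, mul_pow,
    sq_sqrt (abs_nonneg _), integral_image_eq_integral_abs_deriv_smul measurableSet_Icc hφ hinj,
    smul_eq_mul, mul_assoc, integral_const_mul]

lemma normSq_contr_halfDensityPullback
    (hφ : ∀ a ∈ Set.Icc 0 L, HasDerivWithinAt φ (φ' a) (Set.Icc 0 L) a)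
    (hinj : Set.InjOn φ (Set.Icc 0 L)) (himage : φ '' Set.Icc 0 L = Set.Icc 0 t)
    (p q : ℝ → ℝ → ℝ) :
    normSq L (contr L (halfDensityPullback φ φ' p) (halfDensityPullback φ φ' q)) =
      normSq t (contr t p q) := by
  rw [contr_halfDensityPullback hφ hinj himage, normSq_halfDensityPullback hφ hinj himage]

end HalfDensity

section DifferenceKernel

/-- The translation-invariant kernel with profile `k`; contracting two of these on a long interval
approximates a cross-correlation of profiles. -/
def differenceKernel (k : ℝ → ℝ) (x y : ℝ) : ℝ := k (x - y)

/-- The cross-correlation of two functions on the line; junk value `0` at a lag where the product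
is not integrable. -/
noncomputable def crossCorr (p q : ℝ → ℝ) (s : ℝ) : ℝ := ∫ c, p c * q (c + s)

variable {p q : ℝ → ℝ} {L : ℝ}

lemma measurable_differenceKernel (hp : Measurable p) :
    Measurable (differenceKernel p).uncurry :=
  hp.comp (measurable_fst.sub measurable_snd)

lemma contr_differenceKernel_add (p q : ℝ → ℝ) (L a s : ℝ) :
    contr L (differenceKernel p) (differenceKernel q) a (a + s) =
      ∫ c in Set.Icc (a - L) a, p c * q (c + s) := by
  have hpre : (fun c => a - c) ⁻¹' Set.Icc (a - L) a = Set.Icc 0 L := by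
    rw [Set.preimage_const_sub_Icc, sub_self, sub_sub_cancel]
  rw [← (Measure.measurePreserving_sub_left volume a).setIntegral_preimage_emb
    (MeasurableEquiv.subLeft a).measurableEmbedding (fun c => p c * q (c + s)), hpre]
  simp only [contr, differenceKernel, add_sub_right_comm]

lemma abs_contr_differenceKernel_add_le {s : ℝ} (hs : Integrable fun c => p c * q (c + s))
    (L a : ℝ) :
    |contr L (differenceKernel p) (differenceKernel q) a (a + s)| ≤ crossCorr |p| |q| s := by
  rw [contr_differenceKernel_add]
  calc |∫ c in Set.Icc (a - L) a, p c * q (c + s)|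
      ≤ ∫ c in Set.Icc (a - L) a, |p c * q (c + s)| := abs_integral_le_integral_abs
    _ ≤ ∫ c, |p c * q (c + s)| := setIntegral_le_integral hs.abs (ae_of_all _ fun c => abs_nonneg _)
    _ = crossCorr |p| |q| s := by simp only [crossCorr, Pi.abs_apply, abs_mul]

lemma setIntegral_sq_contr_differenceKernel (p q : ℝ → ℝ) (L a : ℝ) :
    ∫ b in Set.Icc 0 L, contr L (differenceKernel p) (differenceKernel q) a b ^ 2 =
      ∫ s in Set.Icc (-a) (L - a),
        contr L (differenceKernel p) (differenceKernel q) a (a + s) ^ 2 := by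
  rw [← (measurePreserving_add_left volume a).setIntegral_preimage_emb
    (MeasurableEquiv.addLeft a).measurableEmbedding, Set.preimage_const_add_Icc, zero_sub]

lemma setIntegral_sq_contr_differenceKernel_le
    (hpq : ∀ᵐ s, Integrable fun c => p c * q (c + s))
    (hsq : Integrable fun s => crossCorr |p| |q| s ^ 2) (L a : ℝ) :
    ∫ b in Set.Icc 0 L, contr L (differenceKernel p) (differenceKernel q) a b ^ 2 ≤
      ∫ s, crossCorr |p| |q| s ^ 2 := by
  rw [setIntegral_sq_contr_differenceKernel]
  calc ∫ s in Set.Icc (-a) (L - a),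
        contr L (differenceKernel p) (differenceKernel q) a (a + s) ^ 2
      ≤ ∫ s in Set.Icc (-a) (L - a), crossCorr |p| |q| s ^ 2 := by
        refine integral_mono_of_nonneg (ae_of_all _ fun s => sq_nonneg _) hsq.integrableOn
          (ae_restrict_of_ae ?_)
        filter_upwards [hpq] with s hs
        exact sq_le_sq.2 ((abs_contr_differenceKernel_add_le hs L a).trans (le_abs_self _))
    _ ≤ ∫ s, crossCorr |p| |q| s ^ 2 :=
        setIntegral_le_integral hsq (ae_of_all _ fun s => sq_nonneg _)

lemma tendsto_setIntegral_of_aecover_of_dominated {ι X E : Type*} [MeasurableSpace X]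
    {μ : Measure X} [NormedAddCommGroup E] [NormedSpace ℝ E] {l : Filter ι}
    [l.IsCountablyGenerated] {S : ι → Set X} (hS : AECover μ l S) {F : ι → X → E} {f : X → E}
    {bound : X → ℝ} (hF : ∀ᶠ i in l, AEStronglyMeasurable (F i) μ)
    (hbound : ∀ᶠ i in l, ∀ᵐ x ∂μ, ‖F i x‖ ≤ bound x) (hint : Integrable bound μ)
    (hlim : ∀ᵐ x ∂μ, Tendsto (fun i => F i x) l (𝓝 (f x))) :
    Tendsto (fun i => ∫ x in S i, F i x ∂μ) l (𝓝 (∫ x, f x ∂μ)) := by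
  simp only [← integral_indicator (hS.measurableSet _)]
  refine tendsto_integral_filter_of_dominated_convergence bound
    (hF.mono fun i hi => hi.indicator (hS.measurableSet i)) (hbound.mono fun i hi => ?_) hint ?_
  · filter_upwards [hi] with x hx using (norm_indicator_le_norm_self _ _).trans hx
  · filter_upwards [hlim, hS.ae_eventually_mem] with x hx hmem
    exact hx.congr' (hmem.mono fun i hi => (Set.indicator_of_mem hi _).symm)

lemma aecover_Icc_mul_sub {x : ℝ} (hx : x ∈ Set.Ioo (0 : ℝ) 1) :
    AECover (volume : Measure ℝ) atTop fun L : ℝ => Set.Icc (L * x - L) (L * x) := by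
  refine aecover_Icc ?_ (tendsto_id.atTop_mul_const hx.1)
  simpa only [mul_sub, mul_one, id_eq] using tendsto_id.atTop_mul_const_of_neg (sub_neg.2 hx.2)

lemma tendsto_setIntegral_sq_contr_differenceKernel (hp : Measurable p) (hq : Measurable q)
    (hpq : ∀ᵐ s, Integrable fun c => p c * q (c + s))
    (hsq : Integrable fun s => crossCorr |p| |q| s ^ 2) {x : ℝ} (hx : x ∈ Set.Ioo (0 : ℝ) 1) :
    Tendsto (fun L => ∫ b in Set.Icc 0 L,
        contr L (differenceKernel p) (differenceKernel q) (L * x) b ^ 2)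
      atTop (𝓝 (∫ s, crossCorr p q s ^ 2)) := by
  simp only [setIntegral_sq_contr_differenceKernel]
  have hcover : AECover (volume : Measure ℝ) atTop fun L : ℝ => Set.Icc (-(L * x)) (L - L * x) := by
    refine aecover_Icc (tendsto_neg_atTop_atBot.comp (tendsto_id.atTop_mul_const hx.1)) ?_
    simpa only [mul_sub, mul_one, id_eq] using tendsto_id.atTop_mul_const (sub_pos.2 hx.2)
  refine tendsto_setIntegral_of_aecover_of_dominated hcover (.of_forall fun L => ?_)
    (.of_forall fun L => ?_) hsq ?_
  · have hcontr := measurable_contr (L := L) (measurable_differenceKernel hp)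
      (measurable_differenceKernel hq)
    exact ((hcontr.comp (measurable_prodMk_left.comp
      (measurable_const_add (L * x)))).pow_const 2).aestronglyMeasurable
  · filter_upwards [hpq] with s hs
    rw [norm_pow, norm_eq_abs]
    exact pow_le_pow_left₀ (abs_nonneg _) (abs_contr_differenceKernel_add_le hs L _) 2
  · filter_upwards [hpq] with s hs
    simp only [contr_differenceKernel_add]
    exact ((aecover_Icc_mul_sub hx).integral_tendsto_of_countably_generated hs).pow 2

lemma setIntegral_Icc_zero_div (hL : 0 < L) (g : ℝ → ℝ) :
    (∫ a in Set.Icc 0 L, g a) / L = ∫ x in Set.Icc (0 : ℝ) 1, g (L * x) := by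
  have h := Measure.setIntegral_comp_smul_of_pos volume g (Set.Icc 0 1) hL
  rw [LinearOrderedField.smul_Icc hL] at h
  simpa [div_eq_inv_mul] using h.symm

-- Almost every row of the square, centred at its own abscissa, exhausts the whole line.
theorem tendsto_normSq_contr_differenceKernel_div (hp : Measurable p) (hq : Measurable q)
    (hpq : ∀ᵐ s, Integrable fun c => p c * q (c + s))
    (hsq : Integrable fun s => crossCorr |p| |q| s ^ 2) :
    Tendsto (fun L => normSq L (contr L (differenceKernel p) (differenceKernel q)) / L)
      atTop (𝓝 (∫ s, crossCorr p q s ^ 2)) := by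
  have hrescaled : Tendsto (fun L : ℝ => ∫ x in Set.Icc (0 : ℝ) 1, ∫ b in Set.Icc 0 L,
        contr L (differenceKernel p) (differenceKernel q) (L * x) b ^ 2)
      atTop (𝓝 (∫ _ in Set.Icc (0 : ℝ) 1, ∫ s, crossCorr p q s ^ 2)) := by
    refine tendsto_integral_filter_of_dominated_convergence
      (fun _ => ∫ s, crossCorr |p| |q| s ^ 2) (.of_forall fun L => ?_)
      (.of_forall fun L => ae_of_all _ fun x => ?_) (integrable_const _) ?_
    · have hcontr := measurable_contr (L := L) (measurable_differenceKernel hp)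
        (measurable_differenceKernel hq)
      exact ((hcontr.pow_const 2).stronglyMeasurable.integral_prod_right'.measurable.comp
        (measurable_const_mul L)).aestronglyMeasurable
    · rw [norm_of_nonneg (integral_nonneg fun b => sq_nonneg _)]
      exact setIntegral_sq_contr_differenceKernel_le hpq hsq L (L * x)
    · rw [← Measure.restrict_congr_set Ioo_ae_eq_Icc]
      filter_upwards [ae_restrict_mem measurableSet_Ioo] with x hx
      exact tendsto_setIntegral_sq_contr_differenceKernel hp hq hpq hsq hx
  rw [setIntegral_const, volume_real_Icc_of_le zero_le_one, sub_zero, one_smul] at hrescaled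
  refine hrescaled.congr' ?_
  filter_upwards [eventually_gt_atTop 0] with L hL
  rw [normSq_eq_integral_sq, setIntegral_Icc_zero_div hL]

end DifferenceKernel

section TwoSidedExponential

/-- The two-sided exponential `x ↦ e^{-γ|x|}` of rate `γ`, the profile of `f_t` in logarithmic
coordinates. -/
noncomputable def twoSidedExp (γ x : ℝ) : ℝ := rexp (-(γ * |x|))

variable {γ : ℝ}

lemma abs_twoSidedExp (γ : ℝ) : |twoSidedExp γ| = twoSidedExp γ :=
  abs_of_nonneg fun _ => (exp_pos _).le

lemma measurable_twoSidedExp (γ : ℝ) : Measurable (twoSidedExp γ) := by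
  unfold twoSidedExp
  fun_prop

lemma differenceKernel_twoSidedExp_comm (γ x y : ℝ) :
    differenceKernel (twoSidedExp γ) x y = differenceKernel (twoSidedExp γ) y x := by
  simp only [differenceKernel, twoSidedExp, abs_sub_comm]

lemma abs_add_abs_add_eq_two_mul_max (c s : ℝ) :
    |c| + |c + s| = 2 * max |c + s / 2| (|s| / 2) := by
  grind

lemma integral_exp_neg_mul_Ioi {r : ℝ} (hr : 0 < r) (h : ℝ) :
    ∫ x in Set.Ioi h, rexp (-(r * x)) = rexp (-(r * h)) / r := by
  simpa only [neg_mul, neg_div_neg_eq] using integral_exp_mul_Ioi (neg_lt_zero.2 hr) h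

lemma integral_exp_neg_mul_max_Ioi {r h : ℝ} (hr : 0 < r) (hh : 0 ≤ h) :
    ∫ x in Set.Ioi 0, rexp (-(r * max x h)) = rexp (-(r * h)) * (h + 1 / r) := by
  have hleft : Set.EqOn (fun x => rexp (-(r * max x h))) (fun _ => rexp (-(r * h)))
      (Set.Ioc 0 h) := fun x hx => by simp only [max_eq_right hx.2]
  have hright : Set.EqOn (fun x => rexp (-(r * max x h))) (fun x => rexp (-(r * x)))
      (Set.Ioi h) := fun x hx => by simp only [max_eq_left (Set.mem_Ioi.1 hx).le]
  have hconst : IntegrableOn (fun _ => rexp (-(r * h))) (Set.Ioc 0 h) :=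
    continuous_const.integrableOn_Ioc
  have hint : IntegrableOn (fun x => rexp (-(r * x))) (Set.Ioi h) := by
    simpa only [neg_mul] using integrableOn_exp_mul_Ioi (neg_lt_zero.2 hr) h
  rw [← Set.Ioc_union_Ioi_eq_Ioi hh, setIntegral_union (Set.Ioc_disjoint_Ioi le_rfl)
    measurableSet_Ioi (hconst.congr_fun hleft.symm measurableSet_Ioc)
    (hint.congr_fun hright.symm measurableSet_Ioi),
    setIntegral_congr_fun measurableSet_Ioc hleft, setIntegral_congr_fun measurableSet_Ioi hright,
    setIntegral_const, volume_real_Ioc_of_le hh, integral_exp_neg_mul_Ioi hr, smul_eq_mul]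
  ring

lemma crossCorr_twoSidedExp (hγ : 0 < γ) (s : ℝ) :
    crossCorr (twoSidedExp γ) (twoSidedExp γ) s = rexp (-(γ * |s|)) * (|s| + 1 / γ) := by
  have hmax (c : ℝ) : twoSidedExp γ c * twoSidedExp γ (c + s) =
      rexp (-(2 * γ * max |c + s / 2| (|s| / 2))) := by
    rw [twoSidedExp, twoSidedExp, ← exp_add]
    congr 1
    linear_combination -γ * abs_add_abs_add_eq_two_mul_max c s
  calc crossCorr (twoSidedExp γ) (twoSidedExp γ) s
      = ∫ c, rexp (-(2 * γ * max |c + s / 2| (|s| / 2))) := by simp only [crossCorr, hmax]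
    _ = ∫ c, rexp (-(2 * γ * max |c| (|s| / 2))) :=
        integral_add_right_eq_self (fun c => rexp (-(2 * γ * max |c| (|s| / 2)))) (s / 2)
    _ = 2 * ∫ c in Set.Ioi 0, rexp (-(2 * γ * max c (|s| / 2))) :=
        integral_comp_abs (f := fun c => rexp (-(2 * γ * max c (|s| / 2))))
    _ = rexp (-(γ * |s|)) * (|s| + 1 / γ) := by
        rw [integral_exp_neg_mul_max_Ioi (by positivity) (by positivity),
          show 2 * γ * (|s| / 2) = γ * |s| by ring]
        field_simp

lemma integrable_twoSidedExp_mul_comp_add (hγ : 0 < γ) (s : ℝ) :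
    Integrable fun c => twoSidedExp γ c * twoSidedExp γ (c + s) := by
  refine .of_integral_ne_zero (ne_of_gt ?_)
  rw [← crossCorr, crossCorr_twoSidedExp hγ]
  positivity

lemma integral_pow_mul_exp_neg_mul_Ioi (n : ℕ) {r : ℝ} (hr : 0 < r) :
    ∫ x in Set.Ioi 0, x ^ n * rexp (-(r * x)) = n.factorial / r ^ (n + 1) := by
  have h := integral_rpow_mul_exp_neg_mul_Ioi (a := (n + 1 : ℕ)) (by positivity) hr
  rw [rpow_natCast, Nat.cast_add_one, Gamma_nat_eq_factorial] at h
  simp only [add_sub_cancel_right, rpow_natCast] at h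
  rw [h]
  ring

lemma integrableOn_pow_mul_exp_neg_mul_Ioi (n : ℕ) {r : ℝ} (hr : 0 < r) :
    IntegrableOn (fun x => x ^ n * rexp (-(r * x))) (Set.Ioi 0) := by
  refine .of_integral_ne_zero (ne_of_gt ?_)
  rw [integral_pow_mul_exp_neg_mul_Ioi n hr]
  positivity

lemma integral_sq_exp_neg_mul_mul_add_Ioi (hγ : 0 < γ) :
    ∫ x in Set.Ioi 0, (rexp (-(γ * x)) * (x + 1 / γ)) ^ 2 = 5 / (4 * γ ^ 3) := by
  have hr : 0 < 2 * γ := by positivity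
  have hexpand (x : ℝ) : (rexp (-(γ * x)) * (x + 1 / γ)) ^ 2 =
      x ^ 2 * rexp (-(2 * γ * x)) + 2 / γ * (x ^ 1 * rexp (-(2 * γ * x))) +
        1 / γ ^ 2 * (x ^ 0 * rexp (-(2 * γ * x))) := by
    rw [mul_pow, ← exp_nat_mul, show ((2 : ℕ) : ℝ) * -(γ * x) = -(2 * γ * x) by push_cast; ring]
    ring
  have hint (n : ℕ) := integrableOn_pow_mul_exp_neg_mul_Ioi n hr
  simp only [hexpand]
  rw [integral_add (by exact (hint 2).add ((hint 1).const_mul _)) ((hint 0).const_mul _),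
    integral_add (hint 2) ((hint 1).const_mul _), integral_const_mul, integral_const_mul]
  simp only [integral_pow_mul_exp_neg_mul_Ioi _ hr]
  norm_num [Nat.factorial]
  field_simp
  norm_num

lemma integral_sq_crossCorr_twoSidedExp (hγ : 0 < γ) :
    ∫ s, crossCorr (twoSidedExp γ) (twoSidedExp γ) s ^ 2 = 5 / (2 * γ ^ 3) := by
  simp only [crossCorr_twoSidedExp hγ]
  rw [integral_comp_abs (f := fun s => (rexp (-(γ * s)) * (s + 1 / γ)) ^ 2),
    integral_sq_exp_neg_mul_mul_add_Ioi hγ]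
  field_simp
  norm_num

lemma integrable_sq_crossCorr_twoSidedExp (hγ : 0 < γ) :
    Integrable fun s => crossCorr (twoSidedExp γ) (twoSidedExp γ) s ^ 2 := by
  refine .of_integral_ne_zero (ne_of_gt ?_)
  rw [integral_sq_crossCorr_twoSidedExp hγ]
  positivity

lemma tendsto_normSq_contr_twoSidedExp_div (hγ : 0 < γ) :
    Tendsto (fun L => normSq L (contr L (differenceKernel (twoSidedExp γ))
        (differenceKernel (twoSidedExp γ))) / L)
      atTop (𝓝 (5 / (2 * γ ^ 3))) := by
  rw [← integral_sq_crossCorr_twoSidedExp hγ]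
  refine tendsto_normSq_contr_differenceKernel_div (measurable_twoSidedExp γ)
    (measurable_twoSidedExp γ) (ae_of_all _ (integrable_twoSidedExp_mul_comp_add hγ)) ?_
  simpa only [abs_twoSidedExp] using integrable_sq_crossCorr_twoSidedExp hγ

end TwoSidedExponential

section LogarithmicCoordinate

/-- The inverse of the coordinate `u ↦ log (T / (T - u))`, used to carry
`[0, log (T / (T - t))]` onto `[0, t]`. -/
noncomputable def logCoordInv (T a : ℝ) : ℝ := T - T * rexp (-a)

variable {T α t : ℝ}

lemma hasDerivAt_logCoordInv (T a : ℝ) : HasDerivAt (logCoordInv T) (T * rexp (-a)) a := by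
  have h : HasDerivAt (logCoordInv T) (-(T * (rexp (-a) * -1))) a :=
    ((hasDerivAt_neg a).exp.const_mul T).const_sub T
  simpa using h

lemma strictMono_logCoordInv (hT : 0 < T) : StrictMono (logCoordInv T) := by
  intro a b hab
  unfold logCoordInv
  gcongr

lemma logCoordInv_log (hT : 0 < T) (ht : t < T) : logCoordInv T (log (T / (T - t))) = t := by
  have hTt : 0 < T - t := sub_pos.2 ht
  rw [logCoordInv, exp_neg, exp_log (div_pos hT hTt)]
  field_simp
  ring

lemma image_logCoordInv_Icc (hT : 0 < T) (ht₀ : 0 ≤ t) (ht : t < T) :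
    logCoordInv T '' Set.Icc 0 (log (T / (T - t))) = Set.Icc 0 t := by
  have hTt : 0 < T - t := sub_pos.2 ht
  have hlog : 0 ≤ log (T / (T - t)) := log_nonneg ((one_le_div hTt).2 (by linarith))
  have hcont : Continuous (logCoordInv T) := by unfold logCoordInv; fun_prop
  rw [hcont.continuousOn.image_Icc_of_monotoneOn hlog
    ((strictMono_logCoordInv hT).monotone.monotoneOn _), logCoordInv_log hT ht]
  simp [logCoordInv]

lemma fker_comm (T α t u v : ℝ) : fker T α t u v = fker T α t v u := by
  simp only [fker, max_comm u v, min_comm u v, and_comm]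

lemma fker_eq_zero {u v : ℝ} (h : ¬(u ∈ Set.Icc 0 t ∧ v ∈ Set.Icc 0 t)) : fker T α t u v = 0 :=
  if_neg h

lemma sqrt_mul_sqrt_mul_rpow_mul_rpow {A B : ℝ} (hA : 0 < A) (hB : 0 < B) (α : ℝ) :
    √A * √B * (B ^ (α - 1) * A ^ (-α)) = (B / A) ^ (α - 1 / 2) := by
  calc √A * √B * (B ^ (α - 1) * A ^ (-α))
      = (B ^ (1 / 2 : ℝ) * B ^ (α - 1)) * (A ^ (1 / 2 : ℝ) * A ^ (-α)) := by
        rw [sqrt_eq_rpow, sqrt_eq_rpow]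
        ring
    _ = B ^ (α - 1 / 2) * A ^ (-(α - 1 / 2)) := by
        rw [← rpow_add hB, ← rpow_add hA]
        ring_nf
    _ = (B / A) ^ (α - 1 / 2) := by rw [rpow_neg hA.le, div_rpow hB.le hA.le, ← div_eq_mul_inv]

lemma halfDensityPullback_logCoordInv_fker (hT : 0 < T) {a b : ℝ}
    (ha : logCoordInv T a ∈ Set.Icc 0 t) (hb : logCoordInv T b ∈ Set.Icc 0 t) :
    halfDensityPullback (logCoordInv T) (fun a => T * rexp (-a)) (fker T α t) a b =
      1 / (2 * √(lam T α t)) * differenceKernel (twoSidedExp (α - 1 / 2)) a b := by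
  wlog hab : a ≤ b generalizing a b
  · rw [differenceKernel_twoSidedExp_comm, ← this hb ha (le_of_not_ge hab), halfDensityPullback,
      halfDensityPullback, fker_comm, mul_comm √_]
  have hle : logCoordInv T a ≤ logCoordInv T b := (strictMono_logCoordInv hT).monotone hab
  have hdist (c : ℝ) : T - logCoordInv T c = T * rexp (-c) := sub_sub_cancel _ _
  have hpos (c : ℝ) : 0 < T * rexp (-c) := by positivity
  have hratio : (T * rexp (-b) / (T * rexp (-a))) ^ (α - 1 / 2) =
      differenceKernel (twoSidedExp (α - 1 / 2)) a b := by
    rw [mul_div_mul_left _ _ hT.ne', ← exp_sub, ← exp_mul, differenceKernel, twoSidedExp,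
      abs_of_nonpos (sub_nonpos.2 hab)]
    ring_nf
  rw [halfDensityPullback, fker, if_pos ⟨ha, hb⟩, max_eq_right hle, min_eq_left hle, hdist, hdist,
    abs_of_pos (hpos a), abs_of_pos (hpos b), ← hratio,
    ← sqrt_mul_sqrt_mul_rpow_mul_rpow (hpos a) (hpos b)]
  ring

lemma normSq_contr_fker (hα : 1 / 2 ≤ α) (ht₀ : 0 ≤ t) (ht : t < T) :
    normSq T (contr T (fker T α t) (fker T α t)) =
      normSq (log (T / (T - t))) (contr (log (T / (T - t)))
        (differenceKernel (twoSidedExp (α - 1 / 2)))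
        (differenceKernel (twoSidedExp (α - 1 / 2)))) / (16 * lam T α t ^ 2) := by
  have hT : 0 < T := ht₀.trans_lt ht
  have himage := image_logCoordInv_Icc hT ht₀ ht
  set L := log (T / (T - t))
  have hderiv (a : ℝ) (_ : a ∈ Set.Icc 0 L) :=
    (hasDerivAt_logCoordInv T a).hasDerivWithinAt (s := Set.Icc 0 L)
  have hinj := (strictMono_logCoordInv hT).injective.injOn (s := Set.Icc 0 L)
  have hmem (a : ℝ) (ha : a ∈ Set.Icc 0 L) : logCoordInv T a ∈ Set.Icc 0 t :=
    himage ▸ Set.mem_image_of_mem _ ha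
  have hpull : ∀ a ∈ Set.Icc 0 L, ∀ b ∈ Set.Icc 0 L,
      halfDensityPullback (logCoordInv T) (fun a => T * rexp (-a)) (fker T α t) a b =
        ((1 / (2 * √(lam T α t))) • differenceKernel (twoSidedExp (α - 1 / 2))) a b :=
    fun a ha b hb => halfDensityPullback_logCoordInv_fker hT (hmem a ha) (hmem b hb)
  have hlam : 0 ≤ lam T α t := div_nonneg (abs_nonneg _) (by linarith)
  have hconst : (1 / (2 * √(lam T α t)) * (1 / (2 * √(lam T α t)))) ^ 2 =
      1 / (16 * lam T α t ^ 2) := by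
    rw [div_mul_div_comm, mul_mul_mul_comm, mul_self_sqrt hlam]
    ring
  rw [normSq_contr_eq_of_support_subset ht.le (fun _ _ => fker_eq_zero) (fun _ _ => fker_eq_zero),
    ← normSq_contr_halfDensityPullback hderiv hinj himage, normSq_contr_congr hpull hpull,
    contr_smul_smul, normSq_smul, hconst, one_div_mul_eq_div]

lemma tendsto_log_sub_nhdsLT (T : ℝ) : Tendsto (fun t => log (T - t)) (𝓝[<] T) atBot := by
  refine tendsto_log_nhdsGT_zero.comp (tendsto_nhdsWithin_iff.2 ⟨?_, ?_⟩)
  · have h : Tendsto (fun t => T - t) (𝓝 T) (𝓝 (T - T)) := tendsto_id.const_sub T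
    rw [sub_self] at h
    exact h.mono_left nhdsWithin_le_nhds
  · filter_upwards [self_mem_nhdsWithin] with t ht using sub_pos.2 (Set.mem_Iio.1 ht)

lemma tendsto_log_div_sub_nhdsLT (hT : 0 < T) :
    Tendsto (fun t => log (T / (T - t))) (𝓝[<] T) atTop := by
  refine (tendsto_atTop_add_const_left _ (log T)
    (tendsto_neg_atBot_atTop.comp (tendsto_log_sub_nhdsLT T))).congr' ?_
  filter_upwards [self_mem_nhdsWithin] with t ht
  rw [log_div hT.ne' (sub_pos.2 ht).ne', sub_eq_add_neg, Function.comp_apply]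

lemma tendsto_log_div_sub_div_lam (hT : 0 < T) (α : ℝ) :
    Tendsto (fun t => log (T / (T - t)) / lam T α t) (𝓝[<] T) (𝓝 (2 * α - 1)) := by
  have hlog := tendsto_log_sub_nhdsLT T
  have hlim : Tendsto (fun t => (2 * α - 1) * (1 - log T * (log (T - t))⁻¹)) (𝓝[<] T)
      (𝓝 (2 * α - 1)) := by
    simpa using (((tendsto_inv_atBot_zero.comp hlog).const_mul (log T)).const_sub 1).const_mul
      (2 * α - 1)
  refine hlim.congr' ?_
  filter_upwards [self_mem_nhdsWithin, hlog.eventually_lt_atBot 0] with t ht hneg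
  have hne := hneg.ne
  rw [log_div hT.ne' (sub_pos.2 ht).ne', lam, abs_of_neg hneg]
  field_simp
  ring

end LogarithmicCoordinate

theorem stmt_9 (T α : ℝ) (hT : 0 < T) (hα : 1 / 2 < α) :
    Tendsto (fun t => lam T α t * normSq T (contr T (fker T α t) (fker T α t)))
      (𝓝[<] T) (𝓝 (5 / (4 * (2 * α - 1) ^ 2))) := by
  have hγ : 0 < α - 1 / 2 := sub_pos.2 hα
  have hL := tendsto_log_div_sub_nhdsLT hT
  have hlim := ((tendsto_log_div_sub_div_lam hT α).mul
    ((tendsto_normSq_contr_twoSidedExp_div hγ).comp hL)).div_const 16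
  have hvalue : (2 * α - 1) * (5 / (2 * (α - 1 / 2) ^ 3)) / 16 = 5 / (4 * (2 * α - 1) ^ 2) := by
    rw [show 2 * α - 1 = 2 * (α - 1 / 2) by ring]
    field_simp
    norm_num
  rw [hvalue] at hlim
  refine hlim.congr' ?_
  filter_upwards [Ioo_mem_nhdsLT hT, hL.eventually_ne_atTop 0] with t ht hL₀
  rw [normSq_contr_fker hα.le ht.1.le ht.2, Function.comp_apply]
  rcases eq_or_ne (lam T α t) 0 with hlam | hlam
  · simp [hlam]
  · field_simp
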